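/- Fix m ≥ 1, a nonconstant cyclic word Ω : ℤ/mℤ → Bool, and the associated angles x_i, y_i, z_i, closed polytope P̄, and total volume functional V. Suppose w ∈ P̄ maximizes V over P̄. Then for every i ∈ ℤ/mℤ, if at least one of x_i, y_i, z_i equals 0 (layer i is flat), then i is a hinge index and w(i) = 0. -/

import Mathlib

open Real

/-- `i` is a hinge index iff the letters (`false` = `L`, `true` = `R`) just before and
just after layer `i` differ. -/
def IsHinge {m : ℕ} (Ω : ZMod m → Bool) (i : ZMod m) : Prop := Ω (i - 1) ≠ Ω i

/-- The dihedral angle `x_i` of layer `i`, determined by the parameters `w` and the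
letters of the cyclic word `Ω` (`false` = `L`, `true` = `R`). -/
noncomputable def xAng {m : ℕ} (Ω : ZMod m → Bool) (w : ZMod m → ℝ) (i : ZMod m) : ℝ :=
  if Ω (i - 1) = Ω i then
    if Ω i = false then w (i - 1) + w (i + 1) else -w (i - 1) + 2 * w i - w (i + 1)
  else
    if Ω (i - 1) = false then w (i - 1) + w i - w (i + 1)
    else -w (i - 1) + w i + w (i + 1)

/-- The dihedral angle `y_i` of layer `i`. -/
noncomputable def yAng {m : ℕ} (Ω : ZMod m → Bool) (w : ZMod m → ℝ) (i : ZMod m) : ℝ :=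
  if Ω (i - 1) = Ω i then
    if Ω i = false then -w (i - 1) + 2 * w i - w (i + 1) else w (i - 1) + w (i + 1)
  else
    if Ω (i - 1) = false then -w (i - 1) + w i + w (i + 1)
    else w (i - 1) + w i - w (i + 1)

/-- The dihedral angle `z_i := π − 2 w i` of layer `i`. -/
noncomputable def zAng {m : ℕ} (w : ZMod m → ℝ) (i : ZMod m) : ℝ := π - 2 * w i

/-- The closed polytope `P̄` of weak angle structures: range, concavity and hinge
conditions with weak inequalities. -/
def Pbar (m : ℕ) (Ω : ZMod m → Bool) : Set (ZMod m → ℝ) :=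
  {w | (∀ i, 0 ≤ w i ∧ w i ≤ π / 2) ∧
       (∀ i, ¬IsHinge Ω i → w (i - 1) + w (i + 1) ≤ 2 * w i) ∧
       (∀ i, IsHinge Ω i → |w (i + 1) - w (i - 1)| ≤ w i)}

/-- The Lobachevsky-type integral `∫₀ˣ log(2 sin u) du`. -/
noncomputable def lob (x : ℝ) : ℝ := ∫ u in (0:ℝ)..x, Real.log (2 * Real.sin u)

/-- The volume `𝒱(x,y,z)` of the ideal tetrahedron with dihedral angles `x, y, z`. -/
noncomputable def idealVol (x y z : ℝ) : ℝ := -lob x - lob y - lob z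

/-- The total volume functional `V(w) = Σᵢ 𝒱(xᵢ, yᵢ, zᵢ)`. -/
noncomputable def totalVol (m : ℕ) [NeZero m] (Ω : ZMod m → Bool) (w : ZMod m → ℝ) : ℝ :=
  ∑ i : ZMod m, idealVol (xAng Ω w i) (yAng Ω w i) (zAng w i)

/-!
Move from the maximizer `w` towards a point `u` of the polytope at which all angles are positive.
Along this segment an angle that starts at `0` contributes `+∞` to the initial speed of the volume,
unless its layer has angles `(0, 0, π)`; in that case the infinite contributions of the three angles
cancel and what remains is positive by monotonicity of `sin` near `0`. Hence at a maximizer every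
flat layer has an angle equal to `π`, and not all layers are of this kind. An angle `π` at layer
`i` forces `w i ∈ {0, π / 2}`, and it forces `w (i + 1) ∈ {0, π / 2}` too unless `i` is a hinge with
`w i = 0`, where it only gives `w (i + 1) = w (i - 1)`. So a flat layer other than a hinge with
parameter `0` would propagate around the cycle and make every layer have an angle `π`.
-/

open Filter Topology Set AffineMap

section Calculus

lemma eventually_lt_nhdsGT_of_deriv_pos {g : ℝ → ℝ} {a : ℝ}
    (hg : ContinuousWithinAt g (Ici a) a) (hderiv : ∀ᶠ t in 𝓝[>] a, 0 < deriv g t) :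
    ∀ᶠ t in 𝓝[>] a, g a < g t := by
  obtain ⟨b, hab, hb⟩ := mem_nhdsGT_iff_exists_Ioo_subset.1 hderiv
  filter_upwards [Ioo_mem_nhdsGT hab] with t ht
  have hcont : ContinuousOn g (Icc a t) := by
    intro s hs
    rcases hs.1.eq_or_lt with rfl | has
    · exact hg.mono Icc_subset_Ici_self
    · have hpos : 0 < deriv g s := hb ⟨has, hs.2.trans_lt ht.2⟩
      exact (differentiableAt_of_deriv_ne_zero hpos.ne').continuousAt.continuousWithinAt
  have hmono : StrictMonoOn g (Icc a t) := by
    refine strictMonoOn_of_deriv_pos (convex_Icc a t) hcont fun s hs => ?_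
    rw [interior_Icc] at hs
    exact hb ⟨hs.1, hs.2.trans ht.2⟩
  exact hmono (left_mem_Icc.2 ht.1.le) (right_mem_Icc.2 ht.1.le) ht.1

lemma tendsto_sum_atTop_of_isBoundedUnder_ge {α κ : Type*} [Fintype κ] {l : Filter α}
    {f : κ → α → ℝ} (hbdd : ∀ j, l.IsBoundedUnder (· ≥ ·) (f j)) {i : κ}
    (hi : Tendsto (f i) l atTop) : Tendsto (fun t => ∑ j, f j t) l atTop := by
  classical
  obtain ⟨C, hC⟩ := (isBoundedUnder_ge_sum (Finset.univ.erase i) fun j _ => hbdd j).eventually_ge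
  refine (tendsto_atTop_add_right_of_le' l C hi hC).congr fun t => ?_
  rw [Finset.sum_apply, Finset.add_sum_erase _ (fun j => f j t) (Finset.mem_univ i)]

end Calculus

section Lobachevsky

lemma intervalIntegrable_log_two_mul_sin (a b : ℝ) :
    IntervalIntegrable (fun u => log (2 * sin u)) MeasureTheory.volume a b :=
  MeromorphicOn.intervalIntegrable_log fun _ _ => AnalyticAt.meromorphicAt (by fun_prop)

lemma continuous_lob : Continuous lob :=
  intervalIntegral.continuous_primitive intervalIntegrable_log_two_mul_sin 0

lemma hasDerivAt_lob {x : ℝ} (hx : x ∈ Ioo 0 π) : HasDerivAt lob (log (2 * sin x)) x := by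
  have hsin : 0 < sin x := sin_pos_of_mem_Ioo hx
  refine intervalIntegral.integral_hasDerivAt_right (intervalIntegrable_log_two_mul_sin 0 x)
    (Measurable.stronglyMeasurable (by fun_prop)).stronglyMeasurableAtFilter ?_
  exact ContinuousAt.log (by fun_prop) (by positivity)

/-- The derivative at time `t` of `-lob` along the segment from `a` to `b`. -/
noncomputable def negLobSpeed (a b t : ℝ) : ℝ := -((b - a) * log (2 * sin (lineMap a b t)))

lemma hasDerivAt_neg_lob_lineMap {a b t : ℝ} (h : lineMap a b t ∈ Ioo 0 π) :
    HasDerivAt (fun s => -lob (lineMap a b s)) (negLobSpeed a b t) t := by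
  rw [negLobSpeed, mul_comm]
  exact ((hasDerivAt_lob h).comp t hasDerivAt_lineMap).neg

lemma tendsto_negLobSpeed {a : ℝ} (b : ℝ) (ha : a ∈ Ioo 0 π) :
    Tendsto (negLobSpeed a b) (𝓝[>] 0) (𝓝 (negLobSpeed a b 0)) := by
  have hsin : 2 * sin (lineMap a b (0 : ℝ)) ≠ 0 := by
    rw [lineMap_apply_zero]
    exact mul_ne_zero two_ne_zero (sin_pos_of_mem_Ioo ha).ne'
  have hcont : ContinuousAt (negLobSpeed a b) 0 := by
    unfold negLobSpeed
    fun_prop (disch := exact hsin)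
  exact hcont.tendsto.mono_left nhdsWithin_le_nhds

lemma tendsto_negLobSpeed_zero_atTop {b : ℝ} (hb : 0 < b) :
    Tendsto (negLobSpeed 0 b) (𝓝[>] 0) atTop := by
  have hsin : Tendsto (fun t : ℝ => 2 * sin (lineMap 0 b t)) (𝓝[>] 0) (𝓝[>] 0) := by
    refine tendsto_nhdsWithin_iff.2 ⟨?_, ?_⟩
    · have hcont : Continuous fun t : ℝ => 2 * sin (lineMap 0 b t) := by fun_prop
      simpa using (hcont.tendsto 0).mono_left nhdsWithin_le_nhds
    · filter_upwards [Ioo_mem_nhdsGT (div_pos pi_pos hb)] with t ht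
      rw [lineMap_apply_ring', sub_zero, add_zero]
      exact mul_pos two_pos
        (sin_pos_of_pos_of_lt_pi (mul_pos ht.1 hb) ((lt_div_iff₀ hb).1 ht.2))
  have hlog := (tendsto_log_nhdsGT_zero.comp hsin).const_mul_atBot hb
  refine (tendsto_neg_atBot_atTop.comp hlog).congr fun t => ?_
  simp only [negLobSpeed, Function.comp_apply, sub_zero]

lemma isBoundedUnder_ge_negLobSpeed {a b : ℝ} (ha : a ∈ Ico 0 π) (hb : 0 < b) :
    (𝓝[>] 0).IsBoundedUnder (· ≥ ·) (negLobSpeed a b) := by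
  rcases ha.1.eq_or_lt with rfl | hpos
  · exact isBoundedUnder_of_eventually_ge
      ((tendsto_negLobSpeed_zero_atTop hb).eventually_ge_atTop 0)
  · exact (tendsto_negLobSpeed b ⟨hpos, ha.2⟩).isBoundedUnder_ge

end Lobachevsky

section AngleSimplex

variable {ι : Type*} [Fintype ι] {θ : ι → ℝ}

variable (ι) in
/-- The simplex of nonnegative angles with sum `π`; for `ι = Fin 3` these are the angles of the
possibly degenerate ideal tetrahedra. -/
def angleSimplex : Set (ι → ℝ) := {θ | (∀ k, 0 ≤ θ k) ∧ ∑ k, θ k = π}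

/-- The angle tuple is a vertex of the angle simplex: one angle is `π`, which forces the others to
vanish. -/
def IsVertex {ι : Type*} (θ : ι → ℝ) : Prop := ∃ k, θ k = π

lemma convex_angleSimplex : Convex ℝ (angleSimplex ι) := by
  intro θ hθ φ hφ a b ha hb hab
  refine ⟨fun k => add_nonneg (mul_nonneg ha (hθ.1 k)) (mul_nonneg hb (hφ.1 k)), ?_⟩
  simp only [Pi.add_apply, Pi.smul_apply, smul_eq_mul, Finset.sum_add_distrib, ← Finset.mul_sum,
    hθ.2, hφ.2, ← add_mul, hab, one_mul]

lemma le_pi_of_mem_angleSimplex (hθ : θ ∈ angleSimplex ι) (k : ι) : θ k ≤ π :=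
  hθ.2 ▸ Finset.single_le_sum (fun j _ => hθ.1 j) (Finset.mem_univ k)

lemma add_le_pi_of_mem_angleSimplex (hθ : θ ∈ angleSimplex ι) {j k : ι} (hjk : j ≠ k) :
    θ j + θ k ≤ π := by
  classical
  rw [← hθ.2, ← Finset.sum_pair hjk]
  exact Finset.sum_le_univ_sum_of_nonneg hθ.1

lemma eq_zero_of_mem_angleSimplex_of_eq_pi (hθ : θ ∈ angleSimplex ι) {j k : ι} (hj : θ j = π)
    (hjk : j ≠ k) : θ k = 0 := by
  have hsum := add_le_pi_of_mem_angleSimplex hθ hjk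
  exact le_antisymm (by linarith) (hθ.1 k)

lemma eq_zero_or_eq_pi_of_isVertex (hθ : θ ∈ angleSimplex ι) (hθv : IsVertex θ)
    (k : ι) : θ k = 0 ∨ θ k = π := by
  obtain ⟨j, hj⟩ := hθv
  rcases eq_or_ne j k with rfl | hjk
  · exact Or.inr hj
  · exact Or.inl (eq_zero_of_mem_angleSimplex_of_eq_pi hθ hj hjk)

lemma lt_pi_of_mem_angleSimplex_of_pos [Nontrivial ι] (hθ : θ ∈ angleSimplex ι)
    (hpos : ∀ k, 0 < θ k) (k : ι) : θ k < π := by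
  obtain ⟨j, hj⟩ := exists_ne k
  linarith [add_le_pi_of_mem_angleSimplex hθ hj, hpos j]

lemma add_lt_pi_of_mem_angleSimplex_of_pos (hι : 2 < Fintype.card ι) (hθ : θ ∈ angleSimplex ι)
    (hpos : ∀ k, 0 < θ k) {j k : ι} (hjk : j ≠ k) : θ j + θ k < π := by
  classical
  obtain ⟨l, -, hl⟩ := Finset.exists_mem_notMem_of_card_lt_card
    (s := {j, k}) (t := Finset.univ) (Finset.card_le_two.trans_lt hι)
  rw [← hθ.2, ← Finset.sum_pair hjk]
  exact Finset.sum_lt_sum_of_subset (Finset.subset_univ _) (Finset.mem_univ l) hl (hpos l)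
    fun i _ _ => hθ.1 i

end AngleSimplex

section AngleVolume

variable {ι : Type*} [Fintype ι] {θ φ : ι → ℝ}

/-- The volume of a tuple of angles; for `ι = Fin 3` it is the volume of an ideal tetrahedron. -/
noncomputable def angleVol (θ : ι → ℝ) : ℝ := ∑ k, -lob (θ k)

/-- The derivative at time `t` of `angleVol` along the segment from `θ` to `φ`. -/
noncomputable def angleVolSpeed (θ φ : ι → ℝ) (t : ℝ) : ℝ := ∑ k, negLobSpeed (θ k) (φ k) t

lemma continuous_angleVol : Continuous (angleVol : (ι → ℝ) → ℝ) :=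
  continuous_finsetSum _ fun k _ => (continuous_lob.comp (continuous_apply k)).neg

lemma hasDerivAt_angleVol_lineMap [Nontrivial ι] (hθ : θ ∈ angleSimplex ι)
    (hφ : φ ∈ angleSimplex ι) (hpos : ∀ k, 0 < φ k) {t : ℝ} (ht : t ∈ Ioo 0 1) :
    HasDerivAt (fun s => angleVol (lineMap θ φ s)) (angleVolSpeed θ φ t) t := by
  have hmem : lineMap θ φ t ∈ angleSimplex ι :=
    convex_angleSimplex.lineMap_mem hθ hφ (Ioo_subset_Icc_self ht)
  have hmem_pos (k : ι) : 0 < lineMap θ φ t k := by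
    rw [pi_lineMap_apply, lineMap_apply_ring]
    exact add_pos_of_nonneg_of_pos (mul_nonneg (sub_nonneg.2 ht.2.le) (hθ.1 k))
      (mul_pos ht.1 (hpos k))
  have hlt := lt_pi_of_mem_angleSimplex_of_pos hmem hmem_pos
  simp only [pi_lineMap_apply] at hmem_pos hlt
  simp only [angleVol, pi_lineMap_apply]
  exact HasDerivAt.fun_sum fun k _ => hasDerivAt_neg_lob_lineMap ⟨hmem_pos k, hlt k⟩

lemma isBoundedUnder_ge_negLobSpeed_of_not_isVertex (hθ : θ ∈ angleSimplex ι)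
    (hθv : ¬IsVertex θ) (hpos : ∀ k, 0 < φ k) (k : ι) :
    (𝓝[>] 0).IsBoundedUnder (· ≥ ·) (negLobSpeed (θ k) (φ k)) :=
  isBoundedUnder_ge_negLobSpeed
    ⟨hθ.1 k, (le_pi_of_mem_angleSimplex hθ k).lt_of_ne (not_exists.1 hθv k)⟩ (hpos k)

lemma tendsto_angleVolSpeed_atTop (hθ : θ ∈ angleSimplex ι) (hθv : ¬IsVertex θ)
    (hflat : ∃ k, θ k = 0) (hpos : ∀ k, 0 < φ k) :
    Tendsto (angleVolSpeed θ φ) (𝓝[>] 0) atTop := by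
  obtain ⟨k, hk⟩ := hflat
  refine tendsto_sum_atTop_of_isBoundedUnder_ge (i := k)
    (isBoundedUnder_ge_negLobSpeed_of_not_isVertex hθ hθv hpos) ?_
  rw [hk]
  exact tendsto_negLobSpeed_zero_atTop (hpos k)

lemma log_two_mul_sin_lt_log_two_mul_sin {x y : ℝ} (hx : 0 < x) (hxy : x < y)
    (hy : y ≤ π / 2) : log (2 * sin x) < log (2 * sin y) := by
  have hsin_pos : 0 < sin x := sin_pos_of_pos_of_lt_pi hx (by linarith [pi_pos])
  have hsin_lt : sin x < sin y := sin_lt_sin_of_lt_of_le_pi_div_two (by linarith) hy hxy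
  exact log_lt_log (by positivity) (by linarith)

lemma negLobSpeed_pi (b t : ℝ) : negLobSpeed π b t = (π - b) * log (2 * sin (t * (π - b))) := by
  have hangle : lineMap π b t = π - t * (π - b) := by rw [lineMap_apply_ring']; ring
  rw [negLobSpeed, hangle, sin_pi_sub]
  ring

lemma angleVolSpeed_of_eq_pi [DecidableEq ι] (hθ : θ ∈ angleSimplex ι) (hφ : φ ∈ angleSimplex ι)
    {j : ι} (hj : θ j = π) (t : ℝ) :
    angleVolSpeed θ φ t = ∑ k ∈ Finset.univ.erase j,
      φ k * (log (2 * sin (t * (π - φ j))) - log (2 * sin (t * φ k))) := by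
  have hsum : π - φ j = ∑ k ∈ Finset.univ.erase j, φ k := by
    rw [← hφ.2, ← Finset.add_sum_erase _ _ (Finset.mem_univ j), add_sub_cancel_left]
  have hother : ∀ k ∈ Finset.univ.erase j,
      negLobSpeed (θ k) (φ k) t = -(φ k * log (2 * sin (t * φ k))) := fun k hk => by
    rw [eq_zero_of_mem_angleSimplex_of_eq_pi hθ hj (Finset.ne_of_mem_erase hk).symm, negLobSpeed,
      lineMap_apply_ring', sub_zero, add_zero]
  rw [angleVolSpeed, ← Finset.add_sum_erase _ _ (Finset.mem_univ j), Finset.sum_congr rfl hother,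
    hj, negLobSpeed_pi]
  simp only [mul_sub, Finset.sum_sub_distrib, ← Finset.sum_mul, ← hsum, Finset.sum_neg_distrib]
  ring

lemma eventually_angleVolSpeed_pos_of_isVertex (hι : 2 < Fintype.card ι) (hθ : θ ∈ angleSimplex ι)
    (hθv : IsVertex θ) (hφ : φ ∈ angleSimplex ι) (hpos : ∀ k, 0 < φ k) :
    ∀ᶠ t in 𝓝[>] (0 : ℝ), 0 < angleVolSpeed θ φ t := by
  classical
  obtain ⟨j, hj⟩ := hθv
  have : Nontrivial ι := Fintype.one_lt_card_iff_nontrivial.1 (one_lt_two.trans hι)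
  have hrest : 0 < π - φ j := sub_pos.2 (lt_pi_of_mem_angleSimplex_of_pos hφ hpos j)
  filter_upwards [Ioo_mem_nhdsGT (div_pos pi_div_two_pos hrest)] with t ht
  rw [angleVolSpeed_of_eq_pi hθ hφ hj]
  refine Finset.sum_pos (fun k hk => mul_pos (hpos k) (sub_pos.2 ?_)) ?_
  · have hlt := add_lt_pi_of_mem_angleSimplex_of_pos hι hφ hpos (Finset.ne_of_mem_erase hk)
    exact log_two_mul_sin_lt_log_two_mul_sin (mul_pos ht.1 (hpos k))
      (mul_lt_mul_of_pos_left (lt_sub_iff_add_lt.2 hlt) ht.1) ((lt_div_iff₀ hrest).1 ht.2).le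
  · obtain ⟨k, hk⟩ := exists_ne j
    exact ⟨k, Finset.mem_erase.2 ⟨hk, Finset.mem_univ k⟩⟩

lemma isBoundedUnder_ge_angleVolSpeed (hι : 2 < Fintype.card ι) (hθ : θ ∈ angleSimplex ι)
    (hφ : φ ∈ angleSimplex ι) (hpos : ∀ k, 0 < φ k) :
    (𝓝[>] 0).IsBoundedUnder (· ≥ ·) (angleVolSpeed θ φ) := by
  by_cases hθv : IsVertex θ
  · exact isBoundedUnder_of_eventually_ge
      ((eventually_angleVolSpeed_pos_of_isVertex hι hθ hθv hφ hpos).mono fun _ ht => ht.le)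
  · have hbdd := isBoundedUnder_ge_sum Finset.univ fun k _ =>
      isBoundedUnder_ge_negLobSpeed_of_not_isVertex hθ hθv hpos k
    have hsum : angleVolSpeed θ φ = ∑ k, negLobSpeed (θ k) (φ k) := by
      ext t
      rw [angleVolSpeed, Finset.sum_apply]
    rwa [hsum]

end AngleVolume

section CyclicIndex

/-- The parabola `k * (m - k)` on the representatives `0 ≤ k < m`: as a function on the cycle it
is strictly concave everywhere except at `0`. -/
noncomputable def cyclicParabola (m : ℕ) (z : ZMod m) : ℝ := z.val * (m - z.val)

lemma cyclicParabola_natCast {m k : ℕ} (hk : k ≤ m) : cyclicParabola m k = k * (m - k) := by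
  rcases hk.lt_or_eq with hlt | rfl
  · rw [cyclicParabola, ZMod.val_natCast_of_lt hlt]
  · simp [cyclicParabola]

variable {m : ℕ} [NeZero m]

lemma forall_zmod_of_add_one {P : ZMod m → Prop} {i : ZMod m} (hi : P i)
    (hstep : ∀ k, P k → P (k + 1)) (j : ZMod m) : P j := by
  have hadd (n : ℕ) : P (i + n) := by
    induction n with
    | zero => simpa using hi
    | succ n ih => simpa [add_assoc] using hstep _ ih
  simpa using hadd (j - i).val

lemma exists_isHinge {Ω : ZMod m → Bool} (hΩ : ∃ i j, Ω i ≠ Ω j) : ∃ i, IsHinge Ω i := by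
  obtain ⟨i, j, hij⟩ := hΩ
  by_contra! hno
  refine hij (forall_zmod_of_add_one (P := fun k => Ω i = Ω k) rfl (fun k hk => ?_) j)
  have hletter : Ω (k + 1 - 1) = Ω (k + 1) := not_not.1 (hno (k + 1))
  rwa [← hletter, add_sub_cancel_right]

lemma cyclicParabola_sub_one_add_add_one {z : ZMod m} (hz : z ≠ 0) :
    cyclicParabola m (z - 1) + cyclicParabola m (z + 1) = 2 * cyclicParabola m z - 2 := by
  obtain ⟨k, hk⟩ := Nat.exists_eq_succ_of_ne_zero ((ZMod.val_ne_zero z).2 hz)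
  have hlt : z.val < m := ZMod.val_lt z
  obtain rfl : z = (k + 1 : ℕ) := by rw [← Nat.succ_eq_add_one, ← hk, ZMod.natCast_zmod_val]
  have hpred : ((k + 1 : ℕ) : ZMod m) - 1 = k := by push_cast; ring
  have hsucc : ((k + 1 : ℕ) : ZMod m) + 1 = (k + 2 : ℕ) := by push_cast; ring
  rw [hpred, hsucc, cyclicParabola_natCast (by lia), cyclicParabola_natCast (by lia),
    cyclicParabola_natCast (by lia)]
  push_cast
  ring

lemma cyclicParabola_mem_Icc (z : ZMod m) : cyclicParabola m z ∈ Icc 0 ((m : ℝ) ^ 2) := by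
  have hle : (z.val : ℝ) ≤ m := by exact_mod_cast (ZMod.val_lt z).le
  have hnonneg : (0 : ℝ) ≤ z.val := Nat.cast_nonneg _
  exact ⟨mul_nonneg hnonneg (sub_nonneg.2 hle), by rw [cyclicParabola]; nlinarith⟩

end CyclicIndex

section Layers

variable {m : ℕ} {Ω : ZMod m → Bool} {w u : ZMod m → ℝ} {i : ZMod m}

/-- The angles `(x_i, y_i, z_i)` of layer `i` as a tuple, so that symmetric statements about them
need no case distinction. -/
noncomputable def layerAngles (Ω : ZMod m → Bool) (w : ZMod m → ℝ) (i : ZMod m) : Fin 3 → ℝ :=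
  ![xAng Ω w i, yAng Ω w i, zAng w i]

lemma exists_layerAngles_eq_iff {c : ℝ} :
    (∃ k, layerAngles Ω w i k = c) ↔ xAng Ω w i = c ∨ yAng Ω w i = c ∨ zAng w i = c := by
  simp [Fin.exists_fin_succ, layerAngles]

lemma forall_layerAngles_iff {p : ℝ → Prop} :
    (∀ k, p (layerAngles Ω w i k)) ↔ p (xAng Ω w i) ∧ p (yAng Ω w i) ∧ p (zAng w i) := by
  simp [Fin.forall_fin_succ, layerAngles]

lemma xAng_add_yAng (Ω : ZMod m → Bool) (w : ZMod m → ℝ) (i : ZMod m) :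
    xAng Ω w i + yAng Ω w i = 2 * w i := by
  unfold xAng yAng
  split_ifs <;> ring

lemma sum_layerAngles (Ω : ZMod m → Bool) (w : ZMod m → ℝ) (i : ZMod m) :
    ∑ k, layerAngles Ω w i k = π := by
  simp [Fin.sum_univ_three, layerAngles, xAng_add_yAng, zAng]

lemma layerAngles_lineMap (t : ℝ) :
    layerAngles Ω (lineMap w u t) i = lineMap (layerAngles Ω w i) (layerAngles Ω u i) t := by
  ext k
  fin_cases k <;> simp only [layerAngles, xAng, yAng, zAng, pi_lineMap_apply, lineMap_apply_ring,
    Fin.zero_eta, Fin.mk_one, Fin.reduceFinMk, Matrix.cons_val] <;> (try split_ifs) <;> ring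

lemma mem_Pbar_iff_layerAngles_nonneg :
    w ∈ Pbar m Ω ↔ ∀ i k, 0 ≤ layerAngles Ω w i k := by
  simp only [forall_layerAngles_iff (p := (0 ≤ ·))]
  constructor
  · rintro ⟨hrange, hconcave, hhinge⟩ i
    have := hrange (i - 1)
    have := hrange i
    have := hrange (i + 1)
    refine ⟨?_, ?_, by unfold zAng; linarith⟩ <;>
    · by_cases hi : Ω (i - 1) = Ω i
      · have := hconcave i (not_not.2 hi)
        simp only [xAng, yAng, if_pos hi]
        split_ifs <;> linarith
      · have := abs_le.1 (hhinge i hi)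
        simp only [xAng, yAng, if_neg hi]
        split_ifs <;> linarith
  · intro hangles
    refine ⟨fun i => ?_, fun i hi => ?_, fun i hi => abs_le.2 ?_⟩ <;>
      obtain ⟨hx, hy, hz⟩ := hangles i
    · have := xAng_add_yAng Ω w i
      unfold zAng at hz
      constructor <;> linarith
    · simp only [xAng, yAng, if_pos (not_not.1 hi)] at hx hy
      split_ifs at hx hy <;> linarith
    · simp only [xAng, yAng, if_neg hi] at hx hy
      split_ifs at hx hy <;> constructor <;> linarith

lemma mem_Pbar_of_layerAngles_pos (hw : ∀ i k, 0 < layerAngles Ω w i k) : w ∈ Pbar m Ω :=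
  mem_Pbar_iff_layerAngles_nonneg.2 fun i k => (hw i k).le

lemma layerAngles_mem_angleSimplex (hw : w ∈ Pbar m Ω) (i : ZMod m) :
    layerAngles Ω w i ∈ angleSimplex (Fin 3) :=
  ⟨mem_Pbar_iff_layerAngles_nonneg.1 hw i, sum_layerAngles Ω w i⟩

lemma lineMap_mem_Pbar (hw : w ∈ Pbar m Ω) (hu : u ∈ Pbar m Ω) {t : ℝ} (ht : t ∈ Icc 0 1) :
    lineMap w u t ∈ Pbar m Ω := by
  refine mem_Pbar_iff_layerAngles_nonneg.2 fun i => ?_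
  rw [layerAngles_lineMap]
  exact (convex_angleSimplex.lineMap_mem (layerAngles_mem_angleSimplex hw i)
    (layerAngles_mem_angleSimplex hu i) ht).1

lemma layerAngles_pos_of_strictConcave_of_mem_Icc (hrange : ∀ i, u i ∈ Icc 1 (5 / 4))
    (hconcave : ∀ i, ¬IsHinge Ω i → u (i - 1) + u (i + 1) < 2 * u i) (i : ZMod m) :
    ∀ k, 0 < layerAngles Ω u i k := by
  rw [forall_layerAngles_iff (p := (0 < ·))]
  obtain ⟨_, _⟩ := hrange (i - 1)
  obtain ⟨_, _⟩ := hrange i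
  obtain ⟨_, _⟩ := hrange (i + 1)
  refine ⟨?_, ?_, by unfold zAng; linarith [pi_gt_three]⟩ <;>
  · by_cases hi : Ω (i - 1) = Ω i
    · have := hconcave i (not_not.2 hi)
      simp only [xAng, yAng, if_pos hi]
      split_ifs <;> linarith
    · simp only [xAng, yAng, if_neg hi]
      split_ifs <;> linarith

lemma exists_layerAngles_pos [NeZero m] (hΩ : ∃ i j, Ω i ≠ Ω j) :
    ∃ u, ∀ i k, 0 < layerAngles Ω u i k := by
  obtain ⟨i₀, hi₀⟩ := exists_isHinge hΩ
  have hm : (0 : ℝ) < m := Nat.cast_pos.2 (NeZero.pos m)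
  refine ⟨fun i => 1 + cyclicParabola m (i - i₀) / (4 * m ^ 2),
    layerAngles_pos_of_strictConcave_of_mem_Icc (fun i => ?_) fun i hi => ?_⟩
  · obtain ⟨hnonneg, hle⟩ := cyclicParabola_mem_Icc (i - i₀)
    have hquot : cyclicParabola m (i - i₀) / (4 * m ^ 2) ≤ 1 / 4 := by
      rw [div_le_div_iff₀ (by positivity) (by positivity)]
      linarith
    exact ⟨le_add_of_nonneg_right (by positivity), by linarith⟩
  · have hne : i - i₀ ≠ 0 := sub_ne_zero.2 fun h => hi (h ▸ hi₀)
    have hparabola := cyclicParabola_sub_one_add_add_one hne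
    rw [sub_right_comm, add_sub_right_comm]
    field_simp
    linarith

end Layers

section Maximizer

/-- The value `a` is one of the two ends of the range `[0, π / 2]` of the parameters. -/
def IsEndpoint (a : ℝ) : Prop := a = 0 ∨ a = π / 2

variable {m : ℕ} [NeZero m] {Ω : ZMod m → Bool} {w u : ZMod m → ℝ} {i : ZMod m}

lemma totalVol_eq_sum_angleVol (Ω : ZMod m → Bool) (w : ZMod m → ℝ) :
    totalVol m Ω w = ∑ i, angleVol (layerAngles Ω w i) := by
  simp only [totalVol, idealVol, angleVol, layerAngles, Fin.sum_univ_three, Matrix.cons_val,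
    sub_eq_add_neg]

lemma not_eventually_sum_angleVolSpeed_pos (hw : w ∈ Pbar m Ω)
    (hmax : IsMaxOn (totalVol m Ω) (Pbar m Ω) w) (hu : ∀ i k, 0 < layerAngles Ω u i k) :
    ¬∀ᶠ t in 𝓝[>] (0 : ℝ),
      0 < ∑ i, angleVolSpeed (layerAngles Ω w i) (layerAngles Ω u i) t := by
  intro hspeed
  have huP : u ∈ Pbar m Ω := mem_Pbar_of_layerAngles_pos hu
  have hvol (t : ℝ) : totalVol m Ω (lineMap w u t) =
      ∑ i, angleVol (lineMap (layerAngles Ω w i) (layerAngles Ω u i) t) := by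
    simp only [totalVol_eq_sum_angleVol, layerAngles_lineMap]
  have hcont : Continuous fun t : ℝ => totalVol m Ω (lineMap w u t) := by
    simp only [hvol]
    exact continuous_finsetSum _ fun i _ => continuous_angleVol.comp lineMap_continuous
  have hderiv : ∀ᶠ t in 𝓝[>] 0, 0 < deriv (fun t : ℝ => totalVol m Ω (lineMap w u t)) t := by
    filter_upwards [hspeed, Ioo_mem_nhdsGT one_pos] with t hpos ht
    have h := HasDerivAt.fun_sum (u := Finset.univ) fun i _ =>
      hasDerivAt_angleVol_lineMap (layerAngles_mem_angleSimplex hw i)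
        (layerAngles_mem_angleSimplex huP i) (hu i) ht
    simp only [hvol]
    rwa [h.deriv]
  have hlt := eventually_lt_nhdsGT_of_deriv_pos hcont.continuousWithinAt hderiv
  obtain ⟨t, hlt, ht⟩ := (hlt.and (Ioo_mem_nhdsGT one_pos)).exists
  rw [lineMap_apply_zero] at hlt
  exact (hmax (lineMap_mem_Pbar hw huP (Ioo_subset_Icc_self ht))).not_gt hlt

lemma isVertex_layerAngles_of_exists_eq_zero (hΩ : ∃ i j, Ω i ≠ Ω j) (hw : w ∈ Pbar m Ω)
    (hmax : IsMaxOn (totalVol m Ω) (Pbar m Ω) w) (hflat : ∃ k, layerAngles Ω w i k = 0) :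
    IsVertex (layerAngles Ω w i) := by
  by_contra hne
  obtain ⟨u, hu⟩ := exists_layerAngles_pos hΩ
  have huP : u ∈ Pbar m Ω := mem_Pbar_of_layerAngles_pos hu
  have htotal := tendsto_sum_atTop_of_isBoundedUnder_ge (i := i)
    (fun j => isBoundedUnder_ge_angleVolSpeed (by simp) (layerAngles_mem_angleSimplex hw j)
      (layerAngles_mem_angleSimplex huP j) (hu j))
    (tendsto_angleVolSpeed_atTop (layerAngles_mem_angleSimplex hw i) hne hflat (hu i))
  exact not_eventually_sum_angleVolSpeed_pos hw hmax hu (htotal.eventually_gt_atTop 0)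

lemma not_forall_isVertex_layerAngles (hΩ : ∃ i j, Ω i ≠ Ω j) (hw : w ∈ Pbar m Ω)
    (hmax : IsMaxOn (totalVol m Ω) (Pbar m Ω) w) : ¬∀ i, IsVertex (layerAngles Ω w i) := by
  intro hvertex
  obtain ⟨u, hu⟩ := exists_layerAngles_pos hΩ
  have huP : u ∈ Pbar m Ω := mem_Pbar_of_layerAngles_pos hu
  have hspeed (i : ZMod m) := eventually_angleVolSpeed_pos_of_isVertex (by simp)
    (layerAngles_mem_angleSimplex hw i) (hvertex i) (layerAngles_mem_angleSimplex huP i) (hu i)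
  refine not_eventually_sum_angleVolSpeed_pos hw hmax hu ?_
  filter_upwards [eventually_all.2 hspeed] with t ht
  exact Finset.sum_pos (fun i _ => ht i) Finset.univ_nonempty

lemma isVertex_layerAngles_of_isEndpoint (hΩ : ∃ i j, Ω i ≠ Ω j) (hw : w ∈ Pbar m Ω)
    (hmax : IsMaxOn (totalVol m Ω) (Pbar m Ω) w) (hi : IsEndpoint (w i)) :
    IsVertex (layerAngles Ω w i) := by
  rcases hi with hzero | hhalf
  · exact exists_layerAngles_eq_iff.2 (by simp [zAng, hzero])
  · refine isVertex_layerAngles_of_exists_eq_zero hΩ hw hmax (exists_layerAngles_eq_iff.2 ?_)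
    exact Or.inr (Or.inr (by rw [zAng, hhalf]; ring))

end Maximizer

section Propagation

variable {m : ℕ} {Ω : ZMod m → Bool} {w : ZMod m → ℝ} {i : ZMod m}

lemma isEndpoint_of_isVertex_layerAngles (hw : w ∈ Pbar m Ω)
    (hvertex : IsVertex (layerAngles Ω w i)) : IsEndpoint (w i) := by
  have hz : zAng w i = 0 ∨ zAng w i = π :=
    eq_zero_or_eq_pi_of_isVertex (layerAngles_mem_angleSimplex hw i) hvertex 2
  unfold zAng at hz
  rcases hz with hz | hz
  · exact Or.inr (by linarith)
  · exact Or.inl (by linarith)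

lemma add_one_eq_sub_one_of_isHinge_of_eq_zero (hw : w ∈ Pbar m Ω) (hi : IsHinge Ω i)
    (hzero : w i = 0) : w (i + 1) = w (i - 1) := by
  have habs := hw.2.2 i hi
  rw [hzero] at habs
  exact sub_eq_zero.1 (abs_nonpos_iff.1 habs)

lemma isEndpoint_add_one_of_not_isHinge (hw : w ∈ Pbar m Ω) (hvertex : IsVertex (layerAngles Ω w i))
    (hi : ¬IsHinge Ω i) : IsEndpoint (w (i + 1)) := by
  have hangles := eq_zero_or_eq_pi_of_isVertex (layerAngles_mem_angleSimplex hw i) hvertex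
  have hsum : w (i - 1) + w (i + 1) = 0 ∨ w (i - 1) + w (i + 1) = π := by
    have hx : xAng Ω w i = 0 ∨ xAng Ω w i = π := hangles 0
    have hy : yAng Ω w i = 0 ∨ yAng Ω w i = π := hangles 1
    simp only [xAng, yAng, if_pos (not_not.1 hi)] at hx hy
    split_ifs at hx hy <;> assumption
  obtain ⟨_, _⟩ := hw.1 (i - 1)
  obtain ⟨_, _⟩ := hw.1 (i + 1)
  rcases hsum with hsum | hsum
  · exact Or.inl (by linarith)
  · exact Or.inr (by linarith)

lemma isEndpoint_add_one_of_isHinge_of_ne_zero (hw : w ∈ Pbar m Ω)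
    (hvertex : IsVertex (layerAngles Ω w i)) (hi : IsHinge Ω i) (hne : w i ≠ 0) :
    IsEndpoint (w (i + 1)) := by
  have hangles := eq_zero_or_eq_pi_of_isVertex (layerAngles_mem_angleSimplex hw i) hvertex
  have hhalf : w i = π / 2 := (isEndpoint_of_isVertex_layerAngles hw hvertex).resolve_left hne
  have hdiff : w (i - 1) - w (i + 1) = π / 2 ∨ w (i + 1) - w (i - 1) = π / 2 := by
    have hx : xAng Ω w i = 0 ∨ xAng Ω w i = π := hangles 0
    simp only [xAng, if_neg hi] at hx
    split_ifs at hx <;> rcases hx with hx | hx <;>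
      first | exact Or.inl (by linarith) | exact Or.inr (by linarith)
  obtain ⟨_, _⟩ := hw.1 (i - 1)
  obtain ⟨_, _⟩ := hw.1 (i + 1)
  rcases hdiff with hdiff | hdiff
  · exact Or.inl (by linarith)
  · exact Or.inr (by linarith)

lemma isEndpoint_add_one_of_not_isHinge_and_eq_zero (hw : w ∈ Pbar m Ω)
    (hvertex : IsVertex (layerAngles Ω w i)) (hi : ¬(IsHinge Ω i ∧ w i = 0)) :
    IsEndpoint (w (i + 1)) := by
  by_cases hhinge : IsHinge Ω i
  · exact isEndpoint_add_one_of_isHinge_of_ne_zero hw hvertex hhinge fun hzero => hi ⟨hhinge, hzero⟩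
  · exact isEndpoint_add_one_of_not_isHinge hw hvertex hhinge

lemma isEndpoint_add_one_of_isEndpoint_sub_one (hw : w ∈ Pbar m Ω)
    (hvertex : IsVertex (layerAngles Ω w i)) (hprev : IsEndpoint (w (i - 1))) :
    IsEndpoint (w (i + 1)) := by
  by_cases hi : IsHinge Ω i ∧ w i = 0
  · rwa [add_one_eq_sub_one_of_isHinge_of_eq_zero hw hi.1 hi.2]
  · exact isEndpoint_add_one_of_not_isHinge_and_eq_zero hw hvertex hi

end Propagation

/-- At a maximizer of the total volume over `P̄`, any flat layer is a hinge layer with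
parameter `w i = 0`. -/
theorem flat_layer_is_hinge_with_zero_parameter (m : ℕ) [NeZero m] (Ω : ZMod m → Bool)
    (hΩ : ∃ i j, Ω i ≠ Ω j)
    (w : ZMod m → ℝ) (hw : w ∈ Pbar m Ω)
    (hmax : ∀ w' ∈ Pbar m Ω, totalVol m Ω w' ≤ totalVol m Ω w) :
    ∀ i, (xAng Ω w i = 0 ∨ yAng Ω w i = 0 ∨ zAng w i = 0) →
      IsHinge Ω i ∧ w i = 0 := by
  intro i hflat
  by_contra hi
  have hvertex : IsVertex (layerAngles Ω w i) :=
    isVertex_layerAngles_of_exists_eq_zero hΩ hw hmax (exists_layerAngles_eq_iff.2 hflat)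
  have hvertex_of_isEndpoint (k : ZMod m) : IsEndpoint (w k) → IsVertex (layerAngles Ω w k) :=
    isVertex_layerAngles_of_isEndpoint hΩ hw hmax
  have hendpoint (j : ZMod m) : IsEndpoint (w j) ∧ IsEndpoint (w (j + 1)) := by
    refine forall_zmod_of_add_one (i := i)
      (P := fun j => IsEndpoint (w j) ∧ IsEndpoint (w (j + 1))) ?_ ?_ j
    · exact ⟨isEndpoint_of_isVertex_layerAngles hw hvertex,
        isEndpoint_add_one_of_not_isHinge_and_eq_zero hw hvertex hi⟩
    · rintro k ⟨hk, hk'⟩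
      exact ⟨hk', isEndpoint_add_one_of_isEndpoint_sub_one hw (hvertex_of_isEndpoint _ hk')
        (by simpa using hk)⟩
  exact not_forall_isVertex_layerAngles hΩ hw hmax fun j => hvertex_of_isEndpoint j (hendpoint j).1
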